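/- Let Γ̃ be a grading of K[x,y] by an abelian group G in which x and y are G-homogeneous. Then every Γ̃-graded automorphism of K[x,y] is graded-tame, i.e., it is a composition of Γ̃-graded elementary and Γ̃-graded linear automorphisms. -/

import Mathlib

open MvPolynomial

/-- An automorphism of `K[x,y]` is *elementary* if it sends one variable `v` to `v + F`
for a polynomial `F` in the other variable and fixes the other variable. -/
def IsElementary {K : Type*} [CommRing K]
    (φ : MvPolynomial (Fin 2) K ≃ₐ[K] MvPolynomial (Fin 2) K) : Prop :=
  ∃ (i : Fin 2) (F : MvPolynomial (Fin 2) K), i ∉ F.vars ∧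
    φ (X i) = X i + F ∧ ∀ j : Fin 2, j ≠ i → φ (X j) = X j

/-- An automorphism of `K[x,y]` is *linear* if it sends each variable to a `K`-linear
combination of the variables. -/
def IsLinearAut {K : Type*} [CommRing K]
    (φ : MvPolynomial (Fin 2) K ≃ₐ[K] MvPolynomial (Fin 2) K) : Prop :=
  ∀ i : Fin 2, ∃ c : Fin 2 → K, φ (X i) = ∑ j : Fin 2, C (c j) * X j

/-- For a grading of `K[x,y]` by an abelian group `G` in which the variables are
homogeneous with degrees `w 0`, `w 1`, an automorphism is *graded* if it maps each
homogeneous component into itself. -/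
def IsGraded {K : Type*} [CommRing K] {G : Type*} [AddCommGroup G] (w : Fin 2 → G)
    (φ : MvPolynomial (Fin 2) K ≃ₐ[K] MvPolynomial (Fin 2) K) : Prop :=
  ∀ (g : G) (f : MvPolynomial (Fin 2) K),
    f.IsWeightedHomogeneous w g → (φ f).IsWeightedHomogeneous w g


namespace JungAux

section Basic
variable {K : Type*} [Field K]

lemma deg_le_of_coeff {d : Fin 2 →₀ ℕ} {p : MvPolynomial (Fin 2) K} (h : coeff d p ≠ 0) :
    d.degree ≤ p.totalDegree := by
  have := le_totalDegree (mem_support_iff.mpr h)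
  rwa [Finsupp.degree_eq_sum, ← Finsupp.sum_fintype d (fun _ e => e) (fun _ => rfl)]

lemma totalDegree_le_of {p : MvPolynomial (Fin 2) K} {N : ℕ}
    (h : ∀ d, coeff d p ≠ 0 → d.degree ≤ N) : p.totalDegree ≤ N := by
  rw [totalDegree, Finset.sup_le_iff]
  intro d hd
  have := h d (mem_support_iff.mp hd)
  rwa [Finsupp.degree_eq_sum, ← Finsupp.sum_fintype d (fun _ e => e) (fun _ => rfl)] at this

lemma hc_mul {u v : MvPolynomial (Fin 2) K} {a b : ℕ} (hu : u.totalDegree ≤ a)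
    (hv : v.totalDegree ≤ b) :
    homogeneousComponent (a + b) (u * v) = homogeneousComponent a u * homogeneousComponent b v := by
  ext d
  by_cases hd : d.degree = a + b
  · rw [coeff_homogeneousComponent, if_pos hd, coeff_mul, coeff_mul]
    apply Finset.sum_congr rfl
    rintro ⟨x, y⟩ hxy
    rw [Finset.HasAntidiagonal.mem_antidiagonal] at hxy
    simp only at hxy
    have hdeg : x.degree + y.degree = a + b := by rw [← hd, ← hxy, map_add]
    simp only [coeff_homogeneousComponent]
    by_cases hx : x.degree = a
    · have hy : y.degree = b := by omega
      simp [hx, hy]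
    · rw [if_neg hx, zero_mul]
      by_contra hne
      have h1 := deg_le_of_coeff (left_ne_zero_of_mul hne)
      have h2 := deg_le_of_coeff (right_ne_zero_of_mul hne)
      omega
  · rw [coeff_homogeneousComponent, if_neg hd]
    symm
    exact ((homogeneousComponent_isHomogeneous a u).mul
      (homogeneousComponent_isHomogeneous b v)).coeff_eq_zero hd

lemma hc_pow {u : MvPolynomial (Fin 2) K} {a : ℕ} (hu : u.totalDegree ≤ a) (k : ℕ) :
    homogeneousComponent (k * a) (u ^ k) = homogeneousComponent a u ^ k ∧
      (u ^ k).totalDegree ≤ k * a := by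
  refine ⟨?_, (totalDegree_pow u k).trans (by gcongr)⟩
  induction k with
  | zero => simp
  | succ k ih =>
    rw [pow_succ, Nat.succ_mul, hc_mul ((totalDegree_pow u k).trans (by gcongr)) hu, ih, pow_succ]

lemma hc_top_ne_zero {u : MvPolynomial (Fin 2) K} (hu : u ≠ 0) :
    homogeneousComponent u.totalDegree u ≠ 0 := by
  obtain ⟨d, hd, h⟩ := Finset.exists_mem_eq_sup u.support (support_nonempty.mpr hu)
    (fun s => s.sum fun _ e => e)
  intro h0
  have h1 := congrArg (coeff d) h0
  rw [coeff_homogeneousComponent, if_pos, coeff_zero] at h1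
  · exact mem_support_iff.mp hd h1
  · rw [totalDegree, h, Finsupp.degree_eq_sum, ← Finsupp.sum_fintype d (fun _ e => e) (fun _ => rfl)]

lemma totalDegree_pderiv_succ_le (i : Fin 2) {p : MvPolynomial (Fin 2) K} (h : pderiv i p ≠ 0) :
    (pderiv i p).totalDegree + 1 ≤ p.totalDegree := by
  have key : ∀ d, coeff d (pderiv i p) ≠ 0 → d.degree + 1 ≤ p.totalDegree := by
    intro d hd
    rw [coeff_pderiv] at hd
    have := deg_le_of_coeff (left_ne_zero_of_mul hd)
    simpa using this
  obtain ⟨d, hd⟩ := ne_zero_iff.mp h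
  have h1 := key d hd
  have : (pderiv i p).totalDegree ≤ p.totalDegree - 1 :=
    totalDegree_le_of fun d hd => by have := key d hd; omega
  omega

/-- The Jacobian. -/
noncomputable def Jac (u v : MvPolynomial (Fin 2) K) : MvPolynomial (Fin 2) K :=
  pderiv 0 u * pderiv 1 v - pderiv 1 u * pderiv 0 v

lemma totalDegree_Jac {u v : MvPolynomial (Fin 2) K} (h : Jac u v ≠ 0) :
    (Jac u v).totalDegree + 2 ≤ u.totalDegree + v.totalDegree := by
  have aux : ∀ i j : Fin 2, pderiv i u * pderiv j v ≠ 0 →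
      (pderiv i u * pderiv j v).totalDegree + 2 ≤ u.totalDegree + v.totalDegree := by
    intro i j hij
    have h1 := totalDegree_pderiv_succ_le i (left_ne_zero_of_mul hij)
    have h2 := totalDegree_pderiv_succ_le j (right_ne_zero_of_mul hij)
    have := totalDegree_mul (pderiv i u) (pderiv j v)
    omega
  have hs := totalDegree_sub (pderiv 0 u * pderiv 1 v) (pderiv 1 u * pderiv 0 v)
  by_cases h1 : pderiv 0 u * pderiv 1 v = 0
  · have h2 : pderiv 1 u * pderiv 0 v ≠ 0 := by
      intro h2; apply h; simp [Jac, h1, h2]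
    have := aux 1 0 h2
    simp only [Jac, h1, zero_sub, totalDegree_neg]
    exact this
  · have h3 := aux 0 1 h1
    by_cases h2 : pderiv 1 u * pderiv 0 v = 0
    · simpa [Jac, h2] using h3
    · have h4 := aux 1 0 h2
      simp only [Jac]
      rcases le_max_iff.mp hs with h | h <;> omega

lemma pderiv_algHom (φ : MvPolynomial (Fin 2) K →ₐ[K] MvPolynomial (Fin 2) K) (i : Fin 2)
    (p : MvPolynomial (Fin 2) K) :
    pderiv i (φ p) = φ (pderiv 0 p) * pderiv i (φ (X 0)) + φ (pderiv 1 p) * pderiv i (φ (X 1)) := by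
  induction p using MvPolynomial.induction_on with
  | C a => simp [← algebraMap_eq]
  | add p q hp hq => simp only [map_add, hp, hq]; ring
  | mul_X p j hp =>
    simp only [map_mul, pderiv_mul, hp, map_add]
    fin_cases j <;> simp [pderiv_X] <;> ring

lemma Jac_algHom (φ : MvPolynomial (Fin 2) K →ₐ[K] MvPolynomial (Fin 2) K)
    (p q : MvPolynomial (Fin 2) K) :
    Jac (φ p) (φ q) = φ (Jac p q) * Jac (φ (X 0)) (φ (X 1)) := by
  simp only [Jac, pderiv_algHom φ _ p, pderiv_algHom φ _ q, map_sub, map_mul]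
  ring

lemma Jac_XX : Jac (X 0 : MvPolynomial (Fin 2) K) (X 1) = 1 := by
  simp [Jac, pderiv_X]

lemma Jac_unit (φ : MvPolynomial (Fin 2) K ≃ₐ[K] MvPolynomial (Fin 2) K) :
    Jac (φ (X 0)) (φ (X 1)) ≠ 0 := by
  intro h
  have := Jac_algHom (φ : MvPolynomial (Fin 2) K →ₐ[K] MvPolynomial (Fin 2) K)
    (φ.symm (X 0)) (φ.symm (X 1))
  simp [Jac_XX, h] at this

/-- Degree drop bound for the transported partial derivative. -/
lemma deg_step (φ : MvPolynomial (Fin 2) K ≃ₐ[K] MvPolynomial (Fin 2) K)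
    (p : MvPolynomial (Fin 2) K) (hp : φ (pderiv 1 p) ≠ 0) :
    (φ (pderiv 1 p)).totalDegree + 2 ≤ (φ (X 0)).totalDegree + (φ p).totalDegree := by
  have h := Jac_algHom (φ : MvPolynomial (Fin 2) K →ₐ[K] MvPolynomial (Fin 2) K) (X 0) p
  have h0 : Jac (X 0) p = pderiv 1 p := by simp [Jac, pderiv_X]
  rw [h0] at h
  change Jac (φ (X 0)) (φ p) = φ (pderiv 1 p) * Jac (φ (X 0)) (φ (X 1)) at h
  have hne : φ (pderiv 1 p) * Jac (φ (X 0)) (φ (X 1)) ≠ 0 := mul_ne_zero hp (Jac_unit φ)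
  have h1 := totalDegree_Jac (h ▸ hne)
  rw [h, totalDegree_mul_of_isDomain hp (Jac_unit φ)] at h1
  omega

lemma deg_steps (φ : MvPolynomial (Fin 2) K ≃ₐ[K] MvPolynomial (Fin 2) K)
    (p : MvPolynomial (Fin 2) K) (t : ℕ) (hp : φ ((pderiv 1)^[t] p) ≠ 0) :
    (φ ((pderiv 1)^[t] p)).totalDegree + 2 * t
      ≤ t * (φ (X 0)).totalDegree + (φ p).totalDegree := by
  induction t with
  | zero => simp
  | succ t ih =>
    rw [Function.iterate_succ_apply'] at hp ⊢
    have h1 := deg_step φ _ hp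
    have h2 := ih (by intro h; apply hp; rw [(map_eq_zero_iff φ φ.injective).mp h]; simp)
    rw [add_one_mul]
    omega

end Basic

section Lead
variable {K : Type*} [Field K]

lemma weight_eq (n m : ℕ) (s : Fin 2 →₀ ℕ) : Finsupp.weight ![n, m] s = s 0 * n + s 1 * m := by
  simp [Finsupp.weight_apply, Finsupp.sum_fintype, Fin.sum_univ_two]

lemma hc_alg (φ : MvPolynomial (Fin 2) K →ₐ[K] MvPolynomial (Fin 2) K) (n m V : ℕ)
    (hn : (φ (X 0)).totalDegree ≤ n) (hm : (φ (X 1)).totalDegree ≤ m)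
    (F : MvPolynomial (Fin 2) K) (hF : ∀ s ∈ F.support, s 0 * n + s 1 * m ≤ V) :
    homogeneousComponent V (φ F) =
      aeval ![homogeneousComponent n (φ (X 0)), homogeneousComponent m (φ (X 1))]
        (weightedHomogeneousComponent ![n, m] V F) := by
  conv_lhs => rw [F.as_sum]
  conv_rhs => rw [F.as_sum]
  simp only [map_sum]
  apply Finset.sum_congr rfl
  intro s hs
  have hle := hF s hs
  have hmon : φ (monomial s (coeff s F)) = C (coeff s F) * (φ (X 0) ^ s 0 * φ (X 1) ^ s 1) := by
    rw [monomial_eq, Finsupp.prod_fintype _ _ (by simp), Fin.prod_univ_two]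
    simp [← algebraMap_eq]
  obtain ⟨h1, h1'⟩ := hc_pow hn (s 0)
  obtain ⟨h2, h2'⟩ := hc_pow hm (s 1)
  rw [hmon, homogeneousComponent_C_mul]
  by_cases heq : s 0 * n + s 1 * m = V
  · rw [IsWeightedHomogeneous.weightedHomogeneousComponent_same
      (isWeightedHomogeneous_monomial _ _ _ (by rw [weight_eq, heq]))]
    rw [← heq, hc_mul h1' h2', h1, h2, aeval_monomial, Finsupp.prod_fintype _ _ (by simp),
      Fin.prod_univ_two]
    simp [← algebraMap_eq]
  · rw [IsWeightedHomogeneous.weightedHomogeneousComponent_ne (m := s 0 * n + s 1 * m) V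
      (isWeightedHomogeneous_monomial _ _ _ (by rw [weight_eq])) (by omega)]
    rw [homogeneousComponent_eq_zero]
    · simp
    · have := totalDegree_mul (φ (X 0) ^ s 0) (φ (X 1) ^ s 1)
      omega

lemma whc_pderiv (n m V k : ℕ) (F : MvPolynomial (Fin 2) K) :
    weightedHomogeneousComponent ![n, m] V ((pderiv 1)^[k] F) =
      (pderiv 1)^[k] (weightedHomogeneousComponent ![n, m] (V + k * m) F) := by
  induction k generalizing V with
  | zero => simp
  | succ k ih =>
    rw [Function.iterate_succ_apply', Function.iterate_succ_apply']
    rw [show V + (k + 1) * m = (V + m) + k * m by ring, ← ih]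
    ext d
    simp only [coeff_weightedHomogeneousComponent, coeff_pderiv, weight_eq]
    have : (d + Finsupp.single 1 1 : Fin 2 →₀ ℕ) 0 * n + (d + Finsupp.single 1 1 : Fin 2 →₀ ℕ) 1 * m
        = d 0 * n + d 1 * m + m := by
      simp; ring
    rw [this]
    by_cases h : d 0 * n + d 1 * m = V
    · simp [h]
    · simp [h]

lemma support_iter (n m W k : ℕ) (F : MvPolynomial (Fin 2) K)
    (hF : ∀ s ∈ F.support, s 0 * n + s 1 * m ≤ W) :
    ∀ s ∈ ((pderiv 1)^[k] F).support, s 0 * n + s 1 * m + k * m ≤ W := by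
  induction k with
  | zero => simpa using hF
  | succ k ih =>
    intro s hs
    rw [Function.iterate_succ_apply', mem_support_iff, coeff_pderiv] at hs
    have := ih _ (mem_support_iff.mpr (left_ne_zero_of_mul hs))
    simp at this
    linarith

end Lead
end JungAux
namespace JungAux
section Mult
open Polynomial

lemma rootMult_expand_le {R : Type*} [CommRing R] [IsDomain R] [CharZero R] (p : ℕ) (hp : 0 < p)
    (q : Polynomial R) (hq : q ≠ 0) (u : R) (hu : u ≠ 0) :
    (Polynomial.expand R p q).rootMultiplicity u ≤ q.natDegree := by
  obtain ⟨h1, hh, hroot⟩ := exists_eq_pow_rootMultiplicity_mul_and_not_dvd q hq (u ^ p)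
  classical
  set k := q.rootMultiplicity (u ^ p) with hk
  have hke : k ≤ q.natDegree := by
    rw [hk]; exact (count_roots q (a := u ^ p)) ▸ (Multiset.count_le_card _ _).trans (card_roots' q)
  have hx : Polynomial.expand R p q = (Polynomial.X ^ p - Polynomial.C (u ^ p)) ^ k * Polynomial.expand R p h1 := by
    conv_lhs => rw [hh]
    simp
  have hne1 : (Polynomial.X ^ p - Polynomial.C (u ^ p) : Polynomial R) ≠ 0 := X_pow_sub_C_ne_zero hp _
  have hne : Polynomial.expand R p q ≠ 0 := (Polynomial.expand_ne_zero hp).mpr hq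
  rw [hx] at hne ⊢
  rw [rootMultiplicity_mul hne, ← count_roots ((Polynomial.X ^ p - Polynomial.C (u ^ p)) ^ k), roots_pow, Multiset.count_nsmul,
    count_roots]
  have e1 : (Polynomial.expand R p h1).rootMultiplicity u = 0 := by
    apply rootMultiplicity_eq_zero
    rw [IsRoot, expand_eval]
    intro h; exact hroot (dvd_iff_isRoot.mpr h)
  have e2 : (Polynomial.X ^ p - Polynomial.C (u ^ p) : Polynomial R).rootMultiplicity u ≤ 1 := by
    by_contra! hlt
    have := (one_lt_rootMultiplicity_iff_isRoot hne1).mp hlt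
    have h2 := this.2
    rw [IsRoot, derivative_sub, derivative_C, derivative_X_pow] at h2
    simp [hu, hp.ne'] at h2
  rw [e1, add_zero]
  nlinarith

lemma mul_rootMult_le {R : Type*} [CommRing R] [IsDomain R] [CharZero R] (p : ℕ) (hp : 0 < p)
    (Q : Polynomial R) (hQ : Q ≠ 0) (u : R) (hu : u ≠ 0)
    (hs : ∀ i j, Q.coeff i ≠ 0 → Q.coeff j ≠ 0 → i ≡ j [MOD p]) :
    Q.rootMultiplicity u * p ≤ Q.natDegree := by
  obtain ⟨Q', hQ'⟩ : Polynomial.X ^ Q.natTrailingDegree ∣ Q := by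
    rw [X_pow_dvd_iff]; intro d hd; exact coeff_eq_zero_of_lt_natTrailingDegree hd
  set b := Q.natTrailingDegree with hb
  have hc : ∀ i, Q'.coeff i = Q.coeff (i + b) := by
    intro i
    conv_rhs => rw [hQ']
    rw [mul_comm, coeff_mul_X_pow]
  have hb0 : Q.coeff b ≠ 0 := by
    have := mt trailingCoeff_eq_zero.mp hQ
    exact this
  have hex : Q' = Polynomial.expand R p (contract p Q') := by
    ext i
    rw [coeff_expand hp]
    split_ifs with hd
    · rw [coeff_contract hp.ne', Nat.div_mul_cancel hd]
    · by_contra hne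
      rw [hc] at hne
      have := hs _ _ hne hb0
      apply hd
      have h2 : i + b ≡ 0 + b [MOD p] := by simpa using this
      exact (Nat.modEq_zero_iff_dvd).mp (Nat.ModEq.add_right_cancel' b h2)
  have hQ'0 : Q' ≠ 0 := by rintro rfl; simp at hQ'; exact hQ hQ'
  have hq0 : contract p Q' ≠ 0 := by
    intro h; rw [h] at hex; simp at hex; exact hQ'0 hex
  have h1 := rootMult_expand_le p hp _ hq0 u hu
  rw [← hex] at h1
  have h2 : Q.rootMultiplicity u = Q'.rootMultiplicity u := by
    rw [hQ', rootMultiplicity_mul (hQ' ▸ hQ), rootMultiplicity_eq_zero, zero_add]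
    simp [IsRoot, hu]
  have h3 : Q'.natDegree = (contract p Q').natDegree * p := by
    conv_lhs => rw [hex]
    rw [natDegree_expand]
  have h4 : Q.natDegree = b + Q'.natDegree := by
    conv_lhs => rw [hQ']
    rw [natDegree_mul (by simp) hQ'0, natDegree_X_pow]
  rw [h2, h4, h3]
  nlinarith

end Mult

section Theta
variable {K : Type*} [Field K]

/-- Substitute `a` for the first variable and a fresh variable for the second. -/
noncomputable def Theta (a : MvPolynomial (Fin 2) K) :
    MvPolynomial (Fin 2) K →ₐ[K] Polynomial (MvPolynomial (Fin 2) K) :=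
  aeval ![Polynomial.C a, Polynomial.X]

lemma Theta_derivative (a P : MvPolynomial (Fin 2) K) :
    Polynomial.derivative (Theta a P) = Theta a (pderiv 1 P) := by
  induction P using MvPolynomial.induction_on with
  | C c =>
    rw [← algebraMap_eq, AlgHom.commutes, IsScalarTower.algebraMap_apply K (MvPolynomial (Fin 2) K)]
    simp [Polynomial.algebraMap_eq, algebraMap_eq]
  | add p q hp hq => simp only [map_add, hp, hq]
  | mul_X p j hp =>
    simp only [map_mul, Polynomial.derivative_mul, pderiv_mul, hp, map_add]
    fin_cases j <;> simp [pderiv_X, Theta]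

lemma Theta_iter (a P : MvPolynomial (Fin 2) K) (k : ℕ) :
    Polynomial.derivative^[k] (Theta a P) = Theta a ((pderiv 1)^[k] P) := by
  induction k with
  | zero => rfl
  | succ k ih => rw [Function.iterate_succ_apply', Function.iterate_succ_apply', ih, Theta_derivative]

lemma Theta_eval (a b P : MvPolynomial (Fin 2) K) :
    (Theta a P).eval b = aeval ![a, b] P := by
  have : ((Polynomial.aeval b : Polynomial (MvPolynomial (Fin 2) K) →ₐ[MvPolynomial (Fin 2) K]
      MvPolynomial (Fin 2) K).restrictScalars K).comp (Theta a) = aeval ![a, b] := by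
    apply MvPolynomial.algHom_ext
    intro i
    fin_cases i <;> simp [Theta]
  rw [← this]
  simp

lemma Theta_coeff (a P : MvPolynomial (Fin 2) K) (j : ℕ) :
    (Theta a P).coeff j = ∑ s ∈ P.support, if s 1 = j then C (coeff s P) * a ^ s 0 else 0 := by
  conv_lhs => rw [P.as_sum]
  rw [map_sum, Polynomial.finsetSum_coeff]
  apply Finset.sum_congr rfl
  intro s hs
  rw [Theta, aeval_monomial, Finsupp.prod_fintype _ _ (by simp), Fin.prod_univ_two,
    IsScalarTower.algebraMap_apply K (MvPolynomial (Fin 2) K)]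
  simp only [Polynomial.algebraMap_eq, algebraMap_eq, Matrix.cons_val_zero, Matrix.cons_val_one]
  rw [← Polynomial.C_pow, ← mul_assoc, ← Polynomial.C_mul, Polynomial.coeff_C_mul_X_pow]
  simp [eq_comm]

end Theta
end JungAux
namespace JungAux
section Core
variable {K : Type*} [Field K]

lemma prop_of_root [IsAlgClosed K] (H a b : MvPolynomial (Fin 2) K) (n k W : ℕ) (hn : 1 ≤ n)
    (hH : H ≠ 0) (hW : ∀ s ∈ H.support, s 0 * n + s 1 * (k * n) = W) (ha : a ≠ 0)
    (h0 : aeval ![a, b] H = 0) : ∃ α : K, b = C α * a ^ k := by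
  classical
  obtain ⟨s₀, hs₀⟩ := support_nonempty.mpr hH
  set N := s₀ 0 + s₀ 1 * k with hN
  have hWN : ∀ s ∈ H.support, s 0 + s 1 * k = N := by
    intro s hs
    have h1 := hW s hs
    have h2 := hW s₀ hs₀
    apply Nat.eq_of_mul_eq_mul_right (show 0 < n by omega)
    rw [hN]
    linarith
  let L := FractionRing (MvPolynomial (Fin 2) K)
  let ι := algebraMap (MvPolynomial (Fin 2) K) L
  have hι : Function.Injective ι := IsFractionRing.injective _ _
  have ha' : ι a ≠ 0 := by rwa [Ne, map_eq_zero_iff ι hι]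
  let r : L := ι b / ι a ^ k
  have hbr : ι b = r * ι a ^ k := (div_mul_cancel₀ _ (pow_ne_zero k ha')).symm
  let h : Polynomial K := ∑ s ∈ H.support, Polynomial.monomial (s 1) (coeff s H)
  have hne : h ≠ 0 := by
    intro hh
    have := congrArg (fun q => Polynomial.coeff q (s₀ 1)) hh
    simp only [h, Polynomial.finsetSum_coeff, Polynomial.coeff_monomial, Polynomial.coeff_zero] at this
    rw [Finset.sum_eq_single s₀] at this
    · simp at this
      exact mem_support_iff.mp hs₀ this
    · intro s hs hne
      rw [if_neg]
      intro h1
      apply hne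
      have e1 := hWN s hs
      rw [h1] at e1
      ext j
      fin_cases j
      · simp; omega
      · exact h1
    · intro h; exact absurd hs₀ h
  have hroot : Polynomial.aeval r h = 0 := by
    have h1 : ι (aeval ![a, b] H) = ι a ^ N * Polynomial.aeval r h := by
      conv_lhs => rw [H.as_sum]
      simp only [h, map_sum, Finset.mul_sum]
      apply Finset.sum_congr rfl
      intro s hs
      rw [aeval_monomial, Finsupp.prod_fintype _ _ (by simp), Fin.prod_univ_two,
        Polynomial.aeval_monomial]
      simp only [Matrix.cons_val_zero, Matrix.cons_val_one, map_mul, map_pow]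
      rw [hbr, ← hWN s hs]
      have : ι (algebraMap K (MvPolynomial (Fin 2) K) (coeff s H)) = algebraMap K L (coeff s H) :=
        (IsScalarTower.algebraMap_apply _ _ _ _).symm
      rw [this]
      ring
    rw [h0, map_zero] at h1
    exact (mul_eq_zero.mp h1.symm).resolve_left (pow_ne_zero _ ha')
  have halg : IsIntegral K r := IsAlgebraic.isIntegral ⟨h, hne, hroot⟩
  obtain ⟨α, hα⟩ := IsIntegral.mem_range_algebraMap_of_minpoly_splits (K := K) halg
    (IsAlgClosed.splits _)
  refine ⟨α, hι ?_⟩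
  rw [hbr, ← hα, map_mul, map_pow, ← algebraMap_eq]
  congr 1

set_option maxHeartbeats 1000000 in
theorem core [IsAlgClosed K] [CharZero K]
    (φ : MvPolynomial (Fin 2) K ≃ₐ[K] MvPolynomial (Fin 2) K) (n m : ℕ)
    (hn : (φ (X 0)).totalDegree = n) (hm : (φ (X 1)).totalDegree = m)
    (hn1 : 1 ≤ n) (hnm : n ≤ m) (hm2 : 2 ≤ m) :
    ∃ (k : ℕ) (α : K), k * n = m ∧
      homogeneousComponent m (φ (X 1)) = C α * (homogeneousComponent n (φ (X 0))) ^ k := by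
  classical
  obtain ⟨i, hi⟩ : ∃ i : Fin 2, pderiv 1 (φ.symm (X i)) ≠ 0 := by
    by_contra! h
    apply Jac_unit φ.symm
    simp [Jac, h]
  set G := φ.symm (X i) with hG
  have hφG : (φ G).totalDegree = 1 := by simp [hG]
  have hG0 : G ≠ 0 := by intro h; rw [h] at hi; simp at hi
  obtain ⟨s₀, hs₀, hsup⟩ := Finset.exists_mem_eq_sup G.support (support_nonempty.mpr hG0)
    (fun s => s 0 * n + s 1 * m)
  set W := G.support.sup (fun s => s 0 * n + s 1 * m) with hWdef
  have hGW : ∀ s ∈ G.support, s 0 * n + s 1 * m ≤ W := fun s hs =>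
    Finset.le_sup (f := fun s : Fin 2 →₀ ℕ => s 0 * n + s 1 * m) hs
  set H := weightedHomogeneousComponent ![n, m] W G with hH
  have hHsupp : ∀ s ∈ H.support, s 0 * n + s 1 * m = W := by
    intro s hs
    rw [mem_support_iff, hH, coeff_weightedHomogeneousComponent, weight_eq] at hs
    by_contra h
    rw [if_neg h] at hs
    exact hs rfl
  have hs₀H : s₀ ∈ H.support := by
    rw [mem_support_iff, hH, coeff_weightedHomogeneousComponent, weight_eq, if_pos hsup.symm]
    exact mem_support_iff.mp hs₀
  have hH0 : H ≠ 0 := support_nonempty.mp ⟨s₀, hs₀H⟩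
  set a := homogeneousComponent n (φ (X 0)) with ha
  set b := homogeneousComponent m (φ (X 1)) with hb
  have ha0 : a ≠ 0 := by
    rw [ha, ← hn]; apply hc_top_ne_zero
    rw [Ne, map_eq_zero_iff φ φ.injective]; exact X_ne_zero 0
  have hb0 : b ≠ 0 := by
    rw [hb, ← hm]; apply hc_top_ne_zero
    rw [Ne, map_eq_zero_iff φ φ.injective]; exact X_ne_zero 1
  set Q := Theta a H with hQ
  have hQc : ∀ s ∈ H.support, Q.coeff (s 1) = C (coeff s H) * a ^ s 0 := by
    intro s hs
    rw [hQ, Theta_coeff, Finset.sum_eq_single s]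
    · simp
    · intro s' hs' hne
      rw [if_neg]
      intro h1
      apply hne
      have e1 := hHsupp s hs
      have e2 := hHsupp s' hs'
      rw [h1] at e2
      have e3 : s' 0 = s 0 := Nat.eq_of_mul_eq_mul_right (show 0 < n by omega) (by omega)
      ext j
      fin_cases j
      · exact e3
      · exact h1
    · intro h; exact absurd hs h
  have hQs : ∀ j, Q.coeff j ≠ 0 → ∃ s ∈ H.support, s 1 = j := by
    intro j hj
    rw [hQ, Theta_coeff] at hj
    obtain ⟨s, hs, hne⟩ := Finset.exists_ne_zero_of_sum_ne_zero hj
    refine ⟨s, hs, ?_⟩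
    by_contra h
    rw [if_neg h] at hne
    exact hne rfl
  have hQ0 : Q ≠ 0 := by
    intro h
    have := hQc s₀ hs₀H
    rw [h, Polynomial.coeff_zero] at this
    refine mul_ne_zero ?_ (pow_ne_zero _ ha0) this.symm
    rw [Ne, C_eq_zero]
    exact mem_support_iff.mp hs₀H
  -- gcd data
  obtain ⟨d, p, q, hd, hcop, hnp, hmq⟩ := Nat.exists_coprime' (m := n) (n := m)
    (Nat.gcd_pos_of_pos_left _ (by omega))
  have hp : 0 < p := by rcases Nat.eq_zero_or_pos p with h | h; · simp [h] at hnp; omega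
                        · exact h
  set t := Q.rootMultiplicity b with ht
  have ht1 : t * p ≤ Q.natDegree := by
    apply mul_rootMult_le p hp Q hQ0 b hb0
    intro j j' hj hj'
    obtain ⟨s, hs, rfl⟩ := hQs j hj
    obtain ⟨s', hs', rfl⟩ := hQs j' hj'
    have e : s 0 * p + s 1 * q = s' 0 * p + s' 1 * q := by
      have e1 := hHsupp s hs
      have e2 := hHsupp s' hs'
      apply Nat.eq_of_mul_eq_mul_right hd
      rw [hnp, hmq] at e1 e2
      linarith
    have e' : s 1 * q ≡ s' 1 * q [MOD p] := by
      have := congrArg (· % p) e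
      simpa [Nat.ModEq, Nat.mul_add_mod'] using this
    exact Nat.ModEq.cancel_right_of_coprime hcop e'
  have htW : t * p * m ≤ W := by
    obtain ⟨s, hs, h1⟩ := hQs Q.natDegree (by simpa using hQ0)
    have := hHsupp s hs
    rw [h1] at this
    nlinarith
  have htm : t * m ≤ W := by nlinarith
  obtain ⟨V, hV⟩ : ∃ V, V + t * m = W := ⟨W - t * m, by omega⟩
  have hev : aeval ![a, b] ((pderiv 1)^[t] H) ≠ 0 := by
    rw [← Theta_eval, ← Theta_iter, ← hQ, ht, Polynomial.eval_iterate_derivative_rootMultiplicity]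
    rw [nsmul_eq_mul]
    exact mul_ne_zero (by exact_mod_cast Nat.factorial_ne_zero _)
      (Polynomial.eval_divByMonic_pow_rootMultiplicity_ne_zero b hQ0)
  have hlead := hc_alg (φ : MvPolynomial (Fin 2) K →ₐ[K] MvPolynomial (Fin 2) K) n m V
    hn.le hm.le ((pderiv 1)^[t] G) (by
      intro s hs
      have := support_iter n m W t G hGW s hs
      omega)
  rw [whc_pderiv, hV] at hlead
  change homogeneousComponent V (φ ((pderiv 1)^[t] G)) = aeval ![a, b] ((pderiv 1)^[t] H) at hlead
  rw [← hlead] at hev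
  have hVle : V ≤ (φ ((pderiv 1)^[t] G)).totalDegree := by
    by_contra! h
    exact hev (homogeneousComponent_eq_zero _ _ h)
  have hsteps := deg_steps φ G t (by intro h; rw [h] at hev; simp at hev)
  rw [hφG, hn] at hsteps
  have ht0 : t ≠ 0 := by
    intro h0
    rw [h0] at hsteps hVle hV
    have hW1 : W ≤ 1 := by
      simp only [Function.iterate_zero, id] at hsteps hVle
      omega
    obtain ⟨e, he⟩ := ne_zero_iff.mp hi
    rw [coeff_pderiv] at he
    have := hGW _ (mem_support_iff.mpr (left_ne_zero_of_mul he))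
    simp at this
    nlinarith
  have hineq : p * m + 1 ≤ n + m := by
    have h1 : t * (p * m) + 2 * t ≤ t * (n + m) + 1 := by nlinarith
    by_contra! h
    have : t * (n + m) ≤ t * (p * m) := Nat.mul_le_mul_left _ (by omega)
    omega
  have hp1 : p = 1 := by
    by_contra h
    have h2 : 2 ≤ p := by omega
    have := Nat.mul_le_mul_right m h2
    omega
  have hkn : q * n = m := by rw [hnp, hmq, hp1]; ring
  have hroot : aeval ![a, b] H = 0 := by
    have : Q.IsRoot b := (Polynomial.rootMultiplicity_pos hQ0).mp (by omega)
    rw [← Theta_eval]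
    exact this
  obtain ⟨α, hα⟩ := prop_of_root H a b n q W hn1 hH0 (by rw [hkn]; exact hHsupp) ha0 hroot
  exact ⟨q, α, hkn, hα⟩

end Core
end JungAux
namespace JungAux
section Graded
variable {K : Type*} [Field K] {G : Type*} [AddCommGroup G]

lemma isGraded_of_X (w : Fin 2 → G) (φ : MvPolynomial (Fin 2) K ≃ₐ[K] MvPolynomial (Fin 2) K)
    (h : ∀ i, (φ (X i)).IsWeightedHomogeneous w (w i)) : IsGraded w φ := by
  intro g f hf
  rw [f.as_sum, map_sum]
  apply IsWeightedHomogeneous.sum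
  intro s hs
  have hw : Finsupp.weight w s = g := hf (mem_support_iff.mp hs)
  rw [monomial_eq, Finsupp.prod_fintype _ _ (by simp), Fin.prod_univ_two]
  have e : φ (C (coeff s f) * (X 0 ^ s 0 * X 1 ^ s 1)) =
      C (coeff s f) * (φ (X 0) ^ s 0 * φ (X 1) ^ s 1) := by
    rw [map_mul, map_mul, map_pow, map_pow, ← algebraMap_eq, AlgEquiv.commutes]
  rw [e]
  apply IsWeightedHomogeneous.C_mul
  have := ((h 0).pow (s 0)).mul ((h 1).pow (s 1))
  rw [← hw]
  simpa [Finsupp.weight_apply, Finsupp.sum_fintype, Fin.sum_univ_two] using this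

lemma isGraded_X {w : Fin 2 → G} {φ : MvPolynomial (Fin 2) K ≃ₐ[K] MvPolynomial (Fin 2) K}
    (h : IsGraded w φ) (i : Fin 2) : (φ (X i)).IsWeightedHomogeneous w (w i) :=
  h _ _ (isWeightedHomogeneous_X _ _ _)

lemma isGraded_mul {w : Fin 2 → G} {φ ψ : MvPolynomial (Fin 2) K ≃ₐ[K] MvPolynomial (Fin 2) K}
    (h : IsGraded w φ) (h' : IsGraded w ψ) : IsGraded w (φ * ψ) :=
  fun g f hf => h g _ (h' g f hf)

/-- Algebra map underlying `X i ↦ X i + c (X j)^k`. -/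
noncomputable def elemHom (i j : Fin 2) (c : K) (k : ℕ) :
    MvPolynomial (Fin 2) K →ₐ[K] MvPolynomial (Fin 2) K :=
  aeval fun l => if l = i then X i + C c * X j ^ k else X l

lemma elemHom_comp (i j : Fin 2) (hij : j ≠ i) (c : K) (k : ℕ) :
    (elemHom i j c k).comp (elemHom i j (-c) k) = AlgHom.id K _ := by
  apply MvPolynomial.algHom_ext
  intro l
  by_cases h : l = i
  · subst h
    have hC : ∀ a : K, elemHom l j c k (C a) = C a := fun a => by
      rw [← algebraMap_eq, AlgHom.commutes]
    have h1 : elemHom l j c k (X l) = X l + C c * X j ^ k := by simp [elemHom]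
    have h2 : elemHom l j c k (X j) = X j := by simp [elemHom, hij]
    have h3 : elemHom l j (-c) k (X l) = X l + C (-c) * X j ^ k := by simp [elemHom]
    rw [AlgHom.comp_apply, h3, map_add, map_mul, map_pow, hC, h1, h2]
    simp
  · simp [elemHom, h]

/-- The elementary automorphism `X i ↦ X i + c (X j)^k`. -/
noncomputable def elem (i j : Fin 2) (hij : j ≠ i) (c : K) (k : ℕ) :
    MvPolynomial (Fin 2) K ≃ₐ[K] MvPolynomial (Fin 2) K :=
  AlgEquiv.ofAlgHom (elemHom i j c k) (elemHom i j (-c) k) (elemHom_comp i j hij c k)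
    (by simpa using elemHom_comp i j hij (-c) k)

lemma elem_self (i j : Fin 2) (hij : j ≠ i) (c : K) (k : ℕ) :
    elem i j hij c k (X i) = X i + C c * X j ^ k := by
  simp [elem, elemHom]

lemma elem_ne (i j : Fin 2) (hij : j ≠ i) (c : K) (k : ℕ) (l : Fin 2) (hl : l ≠ i) :
    elem i j hij c k (X l) = X l := by
  simp [elem, elemHom, hl]

lemma elem_mul (i j : Fin 2) (hij : j ≠ i) (c : K) (k : ℕ) :
    elem i j hij c k * elem i j hij (-c) k = 1 := by
  ext f
  exact congrArg (coeff _) (DFunLike.congr_fun (elemHom_comp i j hij c k) f)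

lemma elem_isElementary (i j : Fin 2) (hij : j ≠ i) (c : K) (k : ℕ) :
    IsElementary (elem i j hij c k) := by
  refine ⟨i, C c * X j ^ k, ?_, elem_self i j hij c k, elem_ne i j hij c k⟩
  intro h
  rw [C_mul_X_pow_eq_monomial] at h
  obtain ⟨d, hd, hi⟩ := (mem_vars i).mp h
  have := support_monomial_subset hd
  rw [Finset.mem_singleton] at this
  subst this
  simp [Finsupp.single_apply, hij] at hi

lemma elem_isGraded (w : Fin 2 → G) (i j : Fin 2) (hij : j ≠ i) (c : K) (k : ℕ)
    (h : c = 0 ∨ k • w j = w i) : IsGraded w (elem i j hij c k) := by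
  apply isGraded_of_X
  intro l
  by_cases hl : l = i
  · subst hl
    rw [elem_self]
    apply (isWeightedHomogeneous_X _ _ _).add
    rcases h with h | h
    · simp [h, isWeightedHomogeneous_zero]
    · rw [← h]
      exact ((isWeightedHomogeneous_X _ _ _).pow k).C_mul c
  · rw [elem_ne _ _ _ _ _ _ hl]
    exact isWeightedHomogeneous_X _ _ _

/-- Being a product of graded elementary and linear automorphisms. -/
def GTame (w : Fin 2 → G) (φ : MvPolynomial (Fin 2) K ≃ₐ[K] MvPolynomial (Fin 2) K) : Prop :=
  ∃ l : List (MvPolynomial (Fin 2) K ≃ₐ[K] MvPolynomial (Fin 2) K),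
      (∀ ψ ∈ l, IsGraded w ψ ∧ (IsElementary ψ ∨ IsLinearAut ψ)) ∧ φ = l.prod

lemma GTame.of_elem {w : Fin 2 → G} {φ : MvPolynomial (Fin 2) K ≃ₐ[K] MvPolynomial (Fin 2) K}
    (i j : Fin 2) (hij : j ≠ i) (c : K) (k : ℕ) (h : c = 0 ∨ k • w j = w i)
    (ht : GTame w (φ * elem i j hij c k)) : GTame w φ := by
  obtain ⟨l, hl, hp⟩ := ht
  refine ⟨l ++ [elem i j hij (-c) k], ?_, ?_⟩
  · intro ψ hψ
    rcases List.mem_append.mp hψ with h1 | h1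
    · exact hl ψ h1
    · rw [List.mem_singleton] at h1
      subst h1
      exact ⟨elem_isGraded w i j hij _ k (by simpa using h), Or.inl (elem_isElementary i j hij _ k)⟩
  · rw [List.prod_append, ← hp, List.prod_singleton, mul_assoc, elem_mul, mul_one]

lemma coeff_isWH {w : Fin 2 → G} {p : MvPolynomial (Fin 2) K} {g : G}
    (h : p.IsWeightedHomogeneous w g) (n : ℕ) :
    (homogeneousComponent n p).IsWeightedHomogeneous w g := by
  intro d hd
  rw [coeff_homogeneousComponent] at hd
  split_ifs at hd with h1
  · exact h hd
  · exact absurd rfl hd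

lemma one_le_deg (φ : MvPolynomial (Fin 2) K ≃ₐ[K] MvPolynomial (Fin 2) K) (i : Fin 2) :
    1 ≤ (φ (X i)).totalDegree := by
  by_contra! h
  have h0 : (φ (X i)).totalDegree = 0 := by omega
  rw [totalDegree_eq_zero_iff_eq_C] at h0
  have h1 : φ (X i) = φ (C (coeff 0 (φ (X i)))) := by
    rw [← algebraMap_eq, AlgEquiv.commutes, algebraMap_eq]; exact h0
  have h2 := φ.injective h1
  have := congrArg totalDegree h2
  simp at this

lemma fin2_sum {i j : Fin 2} (hij : j ≠ i) (f : Fin 2 → ℕ) : f 0 + f 1 = f i + f j := by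
  fin_cases i <;> fin_cases j <;> simp_all [add_comm]

/-- `core` for either ordering of the variables. -/
theorem core' [IsAlgClosed K] [CharZero K]
    (φ : MvPolynomial (Fin 2) K ≃ₐ[K] MvPolynomial (Fin 2) K) (i j : Fin 2) (hij : j ≠ i)
    (hnm : (φ (X j)).totalDegree ≤ (φ (X i)).totalDegree) (hm2 : 2 ≤ (φ (X i)).totalDegree) :
    ∃ (k : ℕ) (α : K), k * (φ (X j)).totalDegree = (φ (X i)).totalDegree ∧
      homogeneousComponent (φ (X i)).totalDegree (φ (X i)) =
        C α * (homogeneousComponent (φ (X j)).totalDegree (φ (X j))) ^ k := by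
  let σ : Fin 2 ≃ Fin 2 := Equiv.swap 0 j
  have h := core ((renameEquiv K σ).trans φ) (φ (X j)).totalDegree (φ (X i)).totalDegree
  have e0 : ((renameEquiv K σ).trans φ) (X 0) = φ (X j) := by
    simp [σ]
  have e1 : ((renameEquiv K σ).trans φ) (X 1) = φ (X i) := by
    simp only [AlgEquiv.trans_apply, renameEquiv_apply, rename_X, σ]
    fin_cases i <;> fin_cases j <;> simp_all
  rw [e0, e1] at h
  exact h rfl rfl (one_le_deg φ j) hnm hm2

lemma deg_drop {u v : MvPolynomial (Fin 2) K} (k : ℕ) (α : K) (hu : 1 ≤ u.totalDegree)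
    (hk : k * v.totalDegree = u.totalDegree)
    (h : homogeneousComponent u.totalDegree u = C α * (homogeneousComponent v.totalDegree v) ^ k) :
    (u + C (-α) * v ^ k).totalDegree < u.totalDegree := by
  obtain ⟨h1, h2⟩ := hc_pow (le_refl v.totalDegree) k
  rw [hk] at h1 h2
  have hz : homogeneousComponent u.totalDegree (u + C (-α) * v ^ k) = 0 := by
    rw [map_add, homogeneousComponent_C_mul, h1, h]
    simp
  have hle : (u + C (-α) * v ^ k).totalDegree ≤ u.totalDegree := by
    apply (totalDegree_add _ _).trans
    apply max_le le_rfl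
    exact (totalDegree_mul _ _).trans (by simpa using h2)
  refine lt_of_le_of_ne hle fun heq => ?_
  rw [← heq] at hz
  by_cases h0 : u + C (-α) * v ^ k = 0
  · rw [h0] at heq; simp at heq; omega
  · exact hc_top_ne_zero h0 hz

lemma affine_form {p : MvPolynomial (Fin 2) K} (h : p.totalDegree ≤ 1) :
    ∃ c : Fin 2 → K, p = C (coeff 0 p) + ∑ j : Fin 2, C (c j) * X j := by
  have hs := sum_homogeneousComponent p
  have h1 : p = homogeneousComponent 0 p + homogeneousComponent 1 p := by
    conv_lhs => rw [← hs]
    rcases Nat.le_one_iff_eq_zero_or_eq_one.mp h with h0 | h0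
    · rw [h0, Finset.sum_range_one, homogeneousComponent_eq_zero 1 p (by omega), add_zero]
    · rw [h0, Finset.sum_range_succ, Finset.sum_range_one]
  have h2 := homogeneousComponent_mem 1 p
  rw [homogeneousSubmodule_one_eq_span_X, Submodule.mem_span_range_iff_exists_fun] at h2
  obtain ⟨c, hc⟩ := h2
  refine ⟨c, ?_⟩
  conv_lhs => rw [h1]
  rw [homogeneousComponent_zero, ← hc]
  simp [smul_eq_C_mul]

theorem tame_aux [IsAlgClosed K] [CharZero K] (w : Fin 2 → G) (N : ℕ) :
    ∀ φ : MvPolynomial (Fin 2) K ≃ₐ[K] MvPolynomial (Fin 2) K, IsGraded w φ →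
      (φ (X 0)).totalDegree + (φ (X 1)).totalDegree ≤ N → GTame w φ := by
  induction N with
  | zero =>
    intro φ _ h
    have := one_le_deg φ 0
    omega
  | succ N ih =>
    intro φ hφ hN
    by_cases hbig : ∃ i j : Fin 2, j ≠ i ∧ (φ (X j)).totalDegree ≤ (φ (X i)).totalDegree ∧
        2 ≤ (φ (X i)).totalDegree
    · obtain ⟨i, j, hij, hle, h2⟩ := hbig
      obtain ⟨k, α, hk, hα⟩ := core' φ i j hij hle h2
      have hw : k • w j = w i := by
        have hne : homogeneousComponent (φ (X i)).totalDegree (φ (X i)) ≠ 0 := by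
          apply hc_top_ne_zero
          intro h; rw [h] at h2; simp at h2
        have g1 := coeff_isWH (isGraded_X hφ i) (φ (X i)).totalDegree
        have g2 := ((coeff_isWH (isGraded_X hφ j) (φ (X j)).totalDegree).pow k).C_mul α
        rw [← hα] at g2
        exact IsWeightedHomogeneous.inj_right hne g2 g1
      apply GTame.of_elem i j hij (-α) k (Or.inr hw)
      apply ih _ (isGraded_mul hφ (elem_isGraded w i j hij _ k (Or.inr hw)))
      have e1 : (φ * elem i j hij (-α) k) (X i) = φ (X i) + C (-α) * φ (X j) ^ k := by
        rw [AlgEquiv.mul_apply, elem_self, map_add, map_mul, map_pow, ← algebraMap_eq,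
          AlgEquiv.commutes]
      have e2 : (φ * elem i j hij (-α) k) (X j) = φ (X j) := by
        rw [AlgEquiv.mul_apply, elem_ne _ _ _ _ _ _ hij]
      have hd := deg_drop k α (by omega) hk hα
      rw [fin2_sum hij fun l => ((φ * elem i j hij (-α) k) (X l)).totalDegree]
      rw [fin2_sum hij fun l => (φ (X l)).totalDegree] at hN
      rw [e1, e2]
      omega
    · push Not at hbig
      have h01 : ∀ i, (φ (X i)).totalDegree ≤ 1 := by
        have a1 := hbig 0 1 (by simp)
        have a2 := hbig 1 0 (by simp)
        intro i
        fin_cases i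
        · simp only [Fin.zero_eta]
          by_contra! h
          have := le_total (φ (X 0)).totalDegree (φ (X 1)).totalDegree
          omega
        · simp only [Fin.mk_one]
          by_contra! h
          have := le_total (φ (X 0)).totalDegree (φ (X 1)).totalDegree
          omega
      choose c hc using fun i => affine_form (h01 i)
      have hw : ∀ i j : Fin 2, -coeff 0 (φ (X i)) = 0 ∨ 0 • w j = w i := by
        intro i j
        by_cases h : coeff 0 (φ (X i)) = 0
        · left; simp [h]
        · right
          have := isGraded_X hφ i h
          simpa using this
      have h10 : (1 : Fin 2) ≠ 0 := by simp
      apply GTame.of_elem 0 1 h10 _ 0 (hw 0 1)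
      apply GTame.of_elem 1 0 h10.symm _ 0 (hw 1 0)
      set ψ := φ * elem 0 1 h10 (-coeff 0 (φ (X 0))) 0 * elem 1 0 h10.symm (-coeff 0 (φ (X 1))) 0
        with hψ
      refine ⟨[ψ], ?_, by simp⟩
      intro ψ' hψ'
      rw [List.mem_singleton] at hψ'
      subst hψ'
      refine ⟨isGraded_mul (isGraded_mul hφ (elem_isGraded w _ _ _ _ _ (hw 0 1)))
        (elem_isGraded w _ _ _ _ _ (hw 1 0)), Or.inr ?_⟩
      have hC : ∀ a : K, φ (C a) = C a := fun a => by
        rw [← algebraMap_eq, AlgEquiv.commutes]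
      have hC' : ∀ a : K, elem 0 1 h10 (-coeff 0 (φ (X 0))) 0 (C a) = C a := fun a => by
        rw [← algebraMap_eq, AlgEquiv.commutes]
      intro i
      refine ⟨c i, ?_⟩
      have key : ψ (X i) = φ (X i) - C (coeff 0 (φ (X i))) := by
        fin_cases i
        · simp only [Fin.zero_eta, hψ, AlgEquiv.mul_apply]
          rw [elem_ne _ _ _ _ _ _ h10.symm, elem_self]
          simp [hC, sub_eq_add_neg]
        · simp only [Fin.mk_one, hψ, AlgEquiv.mul_apply]
          rw [elem_self, map_add, elem_ne _ _ _ _ _ _ h10]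
          simp [hC, hC', sub_eq_add_neg]
      rw [key]
      conv_lhs => rw [hc i]
      simp
end Graded
end JungAux
/-- Every graded automorphism of the polynomial ring in two variables, with respect to any
grading by an abelian group in which the variables are homogeneous, is graded-tame: it is a
composition of graded elementary and graded linear automorphisms. -/
theorem graded_automorphism_of_plane_is_graded_tame
    {K : Type*} [Field K] [IsAlgClosed K] [CharZero K]
    {G : Type*} [AddCommGroup G] (w : Fin 2 → G)
    (φ : MvPolynomial (Fin 2) K ≃ₐ[K] MvPolynomial (Fin 2) K)
    (hφ : IsGraded w φ) :
    ∃ l : List (MvPolynomial (Fin 2) K ≃ₐ[K] MvPolynomial (Fin 2) K),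
      (∀ ψ ∈ l, IsGraded w ψ ∧ (IsElementary ψ ∨ IsLinearAut ψ)) ∧ φ = l.prod := by
  exact JungAux.tame_aux w _ φ hφ le_rfl
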